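/- arXiv:2206.02401 — 2 statements merged into one kernel-verified Lean document; each statement's English description precedes it below -/
import Mathlib

section
/- Let k be a field and T a noetherian k-scheme. Suppose that for every nonempty reduced closed subscheme T′ ⊆ T there are given a scheme V_{T′}, a proper morphism g_{T′} : V_{T′} → T′ ×_k 𝔸¹_k, and a dense open subscheme U_{T′} ⊆ T′ such that the base change of g_{T′} over U_{T′} ×_k 𝔸¹_k is an isomorphism. Then there exist a natural number N and a strictly decreasing chain of reduced closed subschemes T_red = T₀ ⊋ T₁ ⊋ ⋯ ⊋ T_N = ∅, where T_{i+1} is the complement T_i ∖ U_{T_i} with its reduced structure, such that the finite family of composite morphisms { V_{T_i} → T_i ×_k 𝔸¹_k ↪ T ×_k 𝔸¹_k }_{0 ≤ i < N} is a cdp-covering of T ×_k 𝔸¹_k: the induced morphism ⨿_{0≤i<N} V_{T_i} → T ×_k 𝔸¹_k is proper, and every point y of T ×_k 𝔸¹_k has a preimage x in some V_{T_i} whose residue field extension k(x)/k(y) is an isomorphism. -/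
/-!
Put `T₀ = T_red` and `T_{i+1} = T_i ∖ U_{T_i}`. As long as `T_i` is nonempty this is a strictly
smaller closed subset of the noetherian space `T`, so the chain reaches `∅`. A point `y` of
`T ×ₖ 𝔸¹ₖ` lies over `T_i ∖ T_{i+1} = U_{T_i}` for some `i`; there `g_{T_i}` is an isomorphism,
and neither `U_{T_i} ⊆ T_i` nor `T_i ⊆ T` changes residue fields, so `y` lifts to `V_{T_i}` with
the same residue field. The coproduct of finitely many proper morphisms is proper because universal
closedness, of the morphism and of its diagonal, can be tested after composing with finitely many
jointly surjective morphisms.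
-/

open CategoryTheory CategoryTheory.Limits AlgebraicGeometry TopologicalSpace Opposite

universe u

noncomputable section

variable (k : Type u) [Field k]

/-- The affine line over `k`, mapping to `Spec k`. -/
def affLineMap : Spec (CommRingCat.of (Polynomial k)) ⟶ Spec (CommRingCat.of k) :=
  Spec.map (CommRingCat.ofHom (algebraMap k (Polynomial k)))

/-- The product `W ×ₖ 𝔸¹ₖ` of a `k`-scheme `W` with the affine line. -/
def prodA1 {W : Scheme.{u}} (wk : W ⟶ Spec (CommRingCat.of k)) : Scheme.{u} :=
  pullback wk (affLineMap k)

/-- The morphism `W' ×ₖ 𝔸¹ₖ → W ×ₖ 𝔸¹ₖ` induced by a morphism of `k`-schemes. -/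
def prodA1Map {W' W : Scheme.{u}} {w'k : W' ⟶ Spec (CommRingCat.of k)}
    {wk : W ⟶ Spec (CommRingCat.of k)} (h : W' ⟶ W) (hc : h ≫ wk = w'k) :
    prodA1 k w'k ⟶ prodA1 k wk :=
  pullback.map w'k (affLineMap k) wk (affLineMap k) h (𝟙 _) (𝟙 _)
    (by simp [hc]) (by simp)

section CompletelyDecomposed

variable {X Y Z : Scheme.{u}}

/-- A morphism `f : X ⟶ Y` is completely decomposed at `y : Y` if some point of `X` lies over `y`
and has the same residue field as `y`. -/
def IsCompletelyDecomposedAt (f : X ⟶ Y) (y : Y) : Prop :=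
  ∃ x : X, f x = y ∧ IsIso (f.residueFieldMap x)

/-- A finite family of morphisms `f j : X j ⟶ Y` is a cdp-covering if the induced morphism
`∐ X ⟶ Y` is proper and every point of `Y` lifts to some `X j` with the same residue field. As
each `X j` is open in `∐ X`, residue fields may be computed in `X j`. -/
def IsCdpCovering {σ : Type*} [Finite σ] {X : σ → Scheme.{u}} (f : ∀ j, X j ⟶ Y) : Prop :=
  IsProper (Sigma.desc f) ∧ ∀ y, ∃ j, IsCompletelyDecomposedAt (f j) y

lemma isIso_residueFieldMap_of_surjectiveOnStalks (f : X ⟶ Y) [SurjectiveOnStalks f] (x : X) :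
    IsIso (f.residueFieldMap x) := by
  have hsurj : Function.Surjective (Y.residue (f x) ≫ f.residueFieldMap x).hom := by
    rw [Scheme.residue_residueFieldMap, CommRingCat.hom_comp]
    exact (X.residue_surjective x).comp (f.stalkMap_surjective x)
  rw [CommRingCat.hom_comp, RingHom.coe_comp] at hsurj
  rw [ConcreteCategory.isIso_iff_bijective]
  exact ⟨(f.residueFieldMap x).hom.injective, hsurj.of_comp⟩

lemma isIso_residueFieldMap_of_comp (f : X ⟶ Y) (g : Y ⟶ Z) (x : X)
    [h : IsIso ((f ≫ g).residueFieldMap x)] : IsIso (g.residueFieldMap (f x)) := by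
  rw [Scheme.residueFieldMap_comp] at h
  have hcomp : Function.Surjective (g.residueFieldMap (f x) ≫ f.residueFieldMap x).hom :=
    ((ConcreteCategory.isIso_iff_bijective _).mp h).surjective
  rw [CommRingCat.hom_comp, RingHom.coe_comp] at hcomp
  have hf : IsIso (f.residueFieldMap x) := (ConcreteCategory.isIso_iff_bijective _).mpr
    ⟨(f.residueFieldMap x).hom.injective, hcomp.of_comp⟩
  exact @IsIso.of_isIso_comp_right _ _ _ _ _ (g.residueFieldMap (f x)) (f.residueFieldMap x)
    hf h

namespace IsCompletelyDecomposedAt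

lemma of_isIso (f : X ⟶ Y) [IsIso f] (y : Y) : IsCompletelyDecomposedAt f y :=
  have ⟨x, hx⟩ := f.surjective y
  ⟨x, hx, inferInstance⟩

lemma of_comp {f : X ⟶ Y} {g : Y ⟶ Z} {z : Z} (h : IsCompletelyDecomposedAt (f ≫ g) z) :
    IsCompletelyDecomposedAt g z :=
  have ⟨x, hx, _⟩ := h
  ⟨f x, by rwa [← Scheme.Hom.comp_apply], isIso_residueFieldMap_of_comp f g x⟩

lemma comp {f : X ⟶ Y} {y : Y} (h : IsCompletelyDecomposedAt f y) (g : Y ⟶ Z)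
    [SurjectiveOnStalks g] : IsCompletelyDecomposedAt (f ≫ g) (g y) := by
  obtain ⟨x, rfl, hx⟩ := h
  refine ⟨x, Scheme.Hom.comp_apply .., ?_⟩
  rw [Scheme.residueFieldMap_comp]
  exact IsIso.comp_isIso' (isIso_residueFieldMap_of_surjectiveOnStalks g (f x)) hx

lemma of_pullback_snd {f : X ⟶ Y} {c : Z ⟶ Y} [SurjectiveOnStalks c] {z : Z}
    (h : IsCompletelyDecomposedAt (pullback.snd f c) z) : IsCompletelyDecomposedAt f (c z) :=
  of_comp (f := pullback.fst f c) (pullback.condition (f := f) (g := c) ▸ h.comp c)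

end IsCompletelyDecomposedAt

end CompletelyDecomposed

section SigmaDesc

variable {σ : Type*} {Y : Scheme.{u}} {X : σ → Scheme.{u}}

lemma universallyClosed_of_finite_cover [Finite σ] {Z : Scheme.{u}} (p : ∀ j, X j ⟶ Y)
    (hp : ∀ y, ∃ j x, p j x = y) (f : Y ⟶ Z) [∀ j, UniversallyClosed (p j ≫ f)] :
    UniversallyClosed f := by
  refine ⟨fun P Z' fst b snd H C hC ↦ ?_⟩
  have hclosed (j : σ) : UniversallyClosed (pullback.fst fst (p j) ≫ snd) :=
    MorphismProperty.of_isPullback (P := @UniversallyClosed)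
      ((IsPullback.of_hasPullback fst (p j)).paste_horiz H).flip inferInstance
  have himage : snd '' C = ⋃ j, (pullback.fst fst (p j) ≫ snd) ''
      (pullback.fst fst (p j) ⁻¹' C) := by
    ext z
    simp only [Set.mem_image, Set.mem_iUnion]
    constructor
    · rintro ⟨c, hc, rfl⟩
      obtain ⟨j, x, hx⟩ := hp (fst c)
      obtain ⟨q, rfl, -⟩ := Scheme.Pullback.exists_preimage_pullback c x hx.symm
      exact ⟨j, q, hc, Scheme.Hom.comp_apply ..⟩
    · rintro ⟨j, q, hq, rfl⟩
      exact ⟨_, hq, (Scheme.Hom.comp_apply ..).symm⟩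
  rw [himage]
  exact isClosed_iUnion_of_finite fun j ↦
    Scheme.Hom.isClosedMap _ _ (hC.preimage (Scheme.Hom.continuous _))

lemma isSeparated_of_finite_cover [Finite σ] {Z : Scheme.{u}} (p : ∀ j, X j ⟶ Y)
    (hp : ∀ y, ∃ j x, p j x = y) (f : Y ⟶ Z) [∀ j, UniversallyClosed (p j)]
    [∀ j, IsSeparated (p j ≫ f)] : IsSeparated f := by
  have hdiag (j : σ) : UniversallyClosed (p j ≫ pullback.diagonal f) := by
    have hfactor : p j ≫ pullback.diagonal f = pullback.diagonal (p j ≫ f) ≫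
        pullback.map (p j ≫ f) (p j ≫ f) f f (p j) (p j) (𝟙 Z) (by simp) (by simp) := by
      apply pullback.hom_ext <;> simp [pullback.map, pullback.lift_fst, pullback.lift_snd]
    have : UniversallyClosed
        (pullback.map (p j ≫ f) (p j ≫ f) f f (p j) (p j) (𝟙 Z) (by simp) (by simp)) :=
      MorphismProperty.pullbackMap (P := @UniversallyClosed) inferInstance inferInstance rfl rfl
    rw [hfactor]
    infer_instance
  have := universallyClosed_of_finite_cover p hp (pullback.diagonal f)
  exact ⟨.of_isPreimmersion _ (pullback.diagonal f).isClosedMap.isClosed_range⟩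

lemma isClosedImmersion_sigmaι [Small.{u} σ] (X : σ → Scheme.{u}) (j : σ) :
    IsClosedImmersion (Sigma.ι X j) := by
  have hcompl : (Set.range (Sigma.ι X j))ᶜ = ⋃ i ≠ j, Set.range (Sigma.ι X i) := by
    ext x
    obtain ⟨i, x, rfl⟩ := (sigmaOpenCover X).exists_eq x
    simp only [Set.mem_compl_iff, Set.mem_iUnion, exists_prop]
    refine ⟨fun hij ↦ ⟨i, fun h ↦ hij (h ▸ ⟨x, rfl⟩), x, rfl⟩, ?_⟩
    rintro ⟨i', hi', y, hy⟩ ⟨z, hz⟩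
    exact hi' (congrArg Sigma.fst ((sigmaι_eq_iff X i' j y z).mp (hy.trans hz.symm)))
  refine .of_isPreimmersion _ ?_
  rw [← isOpen_compl_iff, hcompl]
  exact isOpen_biUnion fun i _ ↦ (Sigma.ι X i).isOpenEmbedding.isOpen_range

lemma isProper_sigmaDesc [Finite σ] (f : ∀ j, X j ⟶ Y) [∀ j, IsProper (f j)] :
    IsProper (Sigma.desc f) := by
  have hcover (x : (∐ X : Scheme.{u})) : ∃ j y, Sigma.ι X j y = x := (sigmaOpenCover X).exists_eq x
  have := isClosedImmersion_sigmaι X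
  have hι (j : σ) : IsProper (Sigma.ι X j ≫ Sigma.desc f) := by
    rw [Sigma.ι_desc]
    infer_instance
  have := isSeparated_of_finite_cover (Sigma.ι X) hcover (Sigma.desc f)
  have := universallyClosed_of_finite_cover (Sigma.ι X) hcover (Sigma.desc f)
  have : IsZariskiLocalAtSource @LocallyOfFiniteType.{u} :=
    HasRingHomProperty.instIsZariskiLocalAtSource (Q := RingHom.FiniteType)
  have : LocallyOfFiniteType (Sigma.desc f) :=
    IsZariskiLocalAtSource.sigmaDesc (P := @LocallyOfFiniteType.{u}) inferInstance
  constructor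

end SigmaDesc

section PullbackMapLeft

variable {S A T Z : Scheme.{u}}

/-- The morphism `Z ×[S] A ⟶ T ×[S] A` induced by a morphism `i : Z ⟶ T` of `S`-schemes. -/
abbrev pullbackMapLeft (i : Z ⟶ T) (t : T ⟶ S) (a : A ⟶ S) :
    pullback (i ≫ t) a ⟶ pullback t a :=
  pullback.map (i ≫ t) a t a i (𝟙 A) (𝟙 S) (by simp) (by simp)

lemma isPullback_pullbackMapLeft (i : Z ⟶ T) (t : T ⟶ S) (a : A ⟶ S) :
    IsPullback (pullbackMapLeft i t a) (pullback.fst (i ≫ t) a) (pullback.fst t a) i := by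
  have hsnd : pullbackMapLeft i t a ≫ pullback.snd t a = pullback.snd (i ≫ t) a :=
    (pullback.lift_snd ..).trans (Category.comp_id _)
  refine .of_right ?_ (pullback.lift_fst ..) (IsPullback.of_hasPullback t a).flip
  rw [hsnd]
  exact (IsPullback.of_hasPullback (i ≫ t) a).flip

lemma pullbackMapLeft_mem (P : MorphismProperty Scheme.{u}) [P.IsStableUnderBaseChange]
    {i : Z ⟶ T} (hi : P i) (t : T ⟶ S) (a : A ⟶ S) : P (pullbackMapLeft i t a) :=
  P.of_isPullback (isPullback_pullbackMapLeft i t a).flip hi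

lemma isCompletelyDecomposedAt_comp_pullbackMapLeft {V W : Scheme.{u}} (t : T ⟶ S) (a : A ⟶ S)
    (i : Z ⟶ T) [SurjectiveOnStalks i] (g : V ⟶ pullback (i ≫ t) a)
    (j : W ⟶ Z) [SurjectiveOnStalks j]
    (hg : ∀ w, IsCompletelyDecomposedAt (pullback.snd g (pullbackMapLeft j (i ≫ t) a)) w)
    {y : (pullback t a : Scheme.{u})} {w : W} (hw : i (j w) = pullback.fst t a y) :
    IsCompletelyDecomposedAt (g ≫ pullbackMapLeft i t a) y := by
  have := pullbackMapLeft_mem @SurjectiveOnStalks (i := i) inferInstance t a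
  have := pullbackMapLeft_mem @SurjectiveOnStalks (i := j) inferInstance (i ≫ t) a
  obtain ⟨y', rfl, hy'⟩ := Scheme.exists_preimage_of_isPullback
    (isPullback_pullbackMapLeft i t a) y (j w) hw.symm
  obtain ⟨y'', rfl, -⟩ := Scheme.exists_preimage_of_isPullback
    (isPullback_pullbackMapLeft j (i ≫ t) a) y' w hy'
  exact (hg y'').of_pullback_snd.comp _

end PullbackMapLeft

section ReducedInduced

variable {X : Scheme.{u}}

/-- The closed subset `C` of `X` with its reduced induced scheme structure. -/
abbrev reducedInduced (C : Closeds X) : Scheme.{u} :=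
  (Scheme.IdealSheafData.vanishingIdeal C).subscheme

namespace reducedInduced

/-- The closed immersion of the reduced induced subscheme on `C` into `X`. -/
abbrev ι (C : Closeds X) : reducedInduced C ⟶ X :=
  (Scheme.IdealSheafData.vanishingIdeal C).subschemeι

/-- The closed immersion between the reduced induced subschemes on `D ≤ C`. -/
abbrev inclusion {C D : Closeds X} (h : D ≤ C) : reducedInduced D ⟶ reducedInduced C :=
  Scheme.IdealSheafData.inclusion (Scheme.IdealSheafData.vanishingIdeal_antimono h)

instance isReduced (C : Closeds X) : IsReduced (reducedInduced C) := by
  let 𝒰 := (Scheme.IdealSheafData.vanishingIdeal C).subschemeCover.openCover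
  have (V : X.affineOpens) : IsReduced (𝒰.X V) := by
    change IsReduced (Spec (.of (_ ⧸ (Scheme.IdealSheafData.vanishingIdeal C).ideal V)))
    rw [affine_isReduced_iff, Scheme.IdealSheafData.vanishingIdeal_ideal]
    exact (Ideal.isRadical_iff_quotient_reduced _).mp (PrimeSpectrum.isRadical_vanishingIdeal _)
  exact @IsReduced.of_openCover _ 𝒰 this

lemma range_ι (C : Closeds X) : Set.range (ι C) = C := by
  simp

lemma nonempty_iff {C : Closeds X} : Nonempty (reducedInduced C) ↔ C ≠ ⊥ := by
  rw [← Closeds.coe_nonempty, ← range_ι, Set.range_nonempty_iff_nonempty]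

lemma inclusion_ι {C D : Closeds X} (h : D ≤ C) : inclusion h ≫ ι C = ι D :=
  Scheme.IdealSheafData.inclusion_subschemeι _

lemma surjective_ι_iff {C : Closeds X} : Function.Surjective (ι C) ↔ C = ⊤ := by
  rw [← Set.range_eq_univ, range_ι, ← Closeds.coe_top, SetLike.coe_set_eq]

lemma isEmpty_iff {C : Closeds X} : IsEmpty (reducedInduced C) ↔ C = ⊥ := by
  rw [← not_nonempty_iff, nonempty_iff, not_not]

lemma range_ι_ssubset_range_ι_iff {C D : Closeds X} :
    Set.range (ι D) ⊂ Set.range (ι C) ↔ D < C := by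
  rw [range_ι, range_ι, SetLike.coe_ssubset_coe]

lemma range_inclusion {C D : Closeds X} (h : D ≤ C) :
    Set.range (inclusion h) = ι C ⁻¹' D := by
  rw [← range_ι D, ← inclusion_ι h, Scheme.Hom.comp_base, TopCat.coe_comp, Set.range_comp,
    Set.preimage_image_eq _ (ι C).isClosedEmbedding.injective]

/-- The complement `C ∖ U` of an open `U` of `C`, as a closed subset of the ambient scheme. -/
def diff (C : Closeds X) (U : (reducedInduced C).Opens) : Closeds X :=
  ⟨ι C '' (U : Set (reducedInduced C))ᶜ, (ι C).isClosedMap _ U.isOpen.isClosed_compl⟩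

lemma ι_preimage_diff (C : Closeds X) (U : (reducedInduced C).Opens) :
    ι C ⁻¹' diff C U = (U : Set (reducedInduced C))ᶜ :=
  Set.preimage_image_eq _ (ι C).isClosedEmbedding.injective

lemma range_inclusion_of_eq_diff {C D : Closeds X} {U : (reducedInduced C).Opens} (h : D ≤ C)
    (hD : D = diff C U) : Set.range (inclusion h) = (U : Set (reducedInduced C))ᶜ := by
  rw [range_inclusion, hD, ι_preimage_diff]

lemma diff_le (C : Closeds X) (U : (reducedInduced C).Opens) : diff C U ≤ C :=
  (Set.image_subset_range _ _).trans (range_ι C).subset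

lemma exists_mem_of_notMem_diff {C : Closeds X} {U : (reducedInduced C).Opens} {x : X}
    (hC : x ∈ C) (hU : x ∉ diff C U) : ∃ z : U, ι C (U.ι z) = x := by
  obtain ⟨z, rfl⟩ : x ∈ Set.range (ι C) := by rwa [range_ι]
  exact ⟨⟨z, by_contra fun hz ↦ hU ⟨z, hz, rfl⟩⟩, rfl⟩

lemma diff_lt {C : Closeds X} {U : (reducedInduced C).Opens}
    (hU : (U : Set (reducedInduced C)).Nonempty) : diff C U < C := by
  refine (diff_le C U).lt_of_ne fun h ↦ ?_
  obtain ⟨z, hz⟩ := hU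
  have hzC : ι C z ∈ diff C U := by
    rw [h, ← SetLike.mem_coe, ← range_ι]
    exact ⟨z, rfl⟩
  have : z ∈ ι C ⁻¹' diff C U := hzC
  rw [ι_preimage_diff] at this
  exact this hz

end reducedInduced

end ReducedInduced

section Chain

lemma exists_fin_chain_to_bot {α : Type*} [Preorder α] [OrderBot α] [WellFoundedLT α]
    (next : ∀ a : α, a ≠ ⊥ → α) (hnext : ∀ a ha, next a ha < a) (a : α) :
    ∃ (N : ℕ) (c : Fin (N + 1) → α), c 0 = a ∧ c (Fin.last N) = ⊥ ∧
      ∃ hc : ∀ j : Fin N, c j.castSucc ≠ ⊥, ∀ j, c j.succ = next (c j.castSucc) (hc j) := by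
  induction a using WellFoundedLT.induction with
  | ind a ih =>
    by_cases ha : a = ⊥
    · exact ⟨0, fun _ ↦ a, rfl, ha, nofun, nofun⟩
    · obtain ⟨N, c, hc₀, hcN, hc, hsucc⟩ := ih _ (hnext a ha)
      exact ⟨N + 1, Fin.cons a c, rfl, hcN, Fin.cases ha hc, Fin.cases hc₀ hsucc⟩

lemma exists_castSucc_and_not_succ {N : ℕ} {P : Fin (N + 1) → Prop} (h₀ : P 0)
    (hN : ¬ P (Fin.last N)) : ∃ j : Fin N, P j.castSucc ∧ ¬ P j.succ := by
  by_contra! h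
  exact hN (Fin.induction (motive := P) h₀ h _)

end Chain

theorem stmt1_general {S A T : Scheme.{u}} [NoetherianSpace T] (t : T ⟶ S) (a : A ⟶ S)
    (V : ∀ C : Closeds T, C ≠ ⊥ → Scheme.{u})
    (g : ∀ C hC, V C hC ⟶ pullback (reducedInduced.ι C ≫ t) a)
    (hg : ∀ C hC, IsProper (g C hC))
    (U : ∀ C : Closeds T, C ≠ ⊥ → (reducedInduced C).Opens)
    (hU : ∀ C hC, (U C hC : Set (reducedInduced C)).Nonempty)
    (hUg : ∀ C hC w, IsCompletelyDecomposedAt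
      (pullback.snd (g C hC) (pullbackMapLeft (U C hC).ι (reducedInduced.ι C ≫ t) a)) w) :
    ∃ (N : ℕ) (C : Fin (N + 1) → Closeds T),
      C 0 = ⊤ ∧ C (Fin.last N) = ⊥ ∧ StrictAnti C ∧
      ∃ hC : ∀ j : Fin N, C j.castSucc ≠ ⊥,
        (∀ j, C j.succ = reducedInduced.diff (C j.castSucc) (U _ (hC j))) ∧
        IsCdpCovering fun j ↦
          g _ (hC j) ≫ pullbackMapLeft (reducedInduced.ι (C j.castSucc)) t a := by
  have hlt (C : Closeds T) (hC : C ≠ ⊥) : reducedInduced.diff C (U C hC) < C :=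
    reducedInduced.diff_lt (hU C hC)
  obtain ⟨N, C, hC₀, hCN, hC, hsucc⟩ := exists_fin_chain_to_bot _ hlt ⊤
  refine ⟨N, C, hC₀, hCN, Fin.strictAnti_iff_succ_lt.mpr fun j ↦ hsucc j ▸ hlt _ (hC j),
    hC, hsucc, ?_, fun y ↦ ?_⟩
  · have (j : Fin N) : IsProper (pullbackMapLeft (reducedInduced.ι (C j.castSucc)) t a) :=
      pullbackMapLeft_mem @IsProper inferInstance t a
    exact isProper_sigmaDesc _
  · obtain ⟨j, hmem, hnotMem⟩ :=
      exists_castSucc_and_not_succ (P := fun j ↦ pullback.fst t a y ∈ C j)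
        (hC₀ ▸ Set.mem_univ _) (hCN ▸ Set.notMem_empty _)
    rw [hsucc] at hnotMem
    obtain ⟨z, hz⟩ := reducedInduced.exists_mem_of_notMem_diff hmem hnotMem
    exact ⟨j, isCompletelyDecomposedAt_comp_pullbackMapLeft t a _ _ _ (hUg _ (hC j)) hz⟩

/-- Let `k` be a field and `T` a noetherian `k`-scheme.  Suppose that for
every nonempty reduced closed subscheme `T′ ⊆ T` we are given a scheme `V_{T′}`, a proper
morphism `g_{T′} : V_{T′} → T′ ×ₖ 𝔸¹ₖ`, and a dense open `U_{T′} ⊆ T′` over which `g_{T′}`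
becomes an isomorphism.  Then there are `N : ℕ` and a strictly decreasing chain of reduced
closed subschemes `T_red = T₀ ⊋ T₁ ⊋ ⋯ ⊋ T_N = ∅`, with `T_{i+1}` the complement
`T_i ∖ U_{T_i}` with its reduced structure, such that the family of composites
`V_{T_i} → T_i ×ₖ 𝔸¹ₖ → T ×ₖ 𝔸¹ₖ` is a cdp-covering of `T ×ₖ 𝔸¹ₖ`: the induced morphism
from the coproduct is proper, and every point of `T ×ₖ 𝔸¹ₖ` has a preimage in some `V_{T_i}`
inducing an isomorphism of residue fields. -/
theorem stmt1 (T : Scheme.{u}) [IsNoetherian T] (tk : T ⟶ Spec (CommRingCat.of k))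
    -- the given data, for every nonempty reduced closed subscheme `Z ⊆ T`:
    (V : ∀ (Z : Scheme.{u}) (i : Z ⟶ T), IsClosedImmersion i → IsReduced Z → Nonempty Z →
      Scheme.{u})
    (g : ∀ Z i h₁ h₂ h₃, V Z i h₁ h₂ h₃ ⟶ prodA1 k (i ≫ tk))
    (hgproper : ∀ Z i h₁ h₂ h₃, IsProper (g Z i h₁ h₂ h₃))
    (U : ∀ (Z : Scheme.{u}) (i : Z ⟶ T), IsClosedImmersion i → IsReduced Z → Nonempty Z →
      Z.Opens)
    (hUdense : ∀ (Z : Scheme.{u}) (i : Z ⟶ T) (h₁ : IsClosedImmersion i)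
      (h₂ : IsReduced Z) (h₃ : Nonempty Z),
      Dense ((U Z i h₁ h₂ h₃ : Opens Z) : Set Z))
    -- the base change of `g` over `U ×ₖ 𝔸¹ₖ` is an isomorphism:
    (hUiso : ∀ (Z : Scheme.{u}) (i : Z ⟶ T) (h₁ : IsClosedImmersion i)
      (h₂ : IsReduced Z) (h₃ : Nonempty Z),
      IsIso (pullback.snd (g Z i h₁ h₂ h₃)
        (prodA1Map k (U Z i h₁ h₂ h₃).ι (by rfl)))) :
    ∃ (N : ℕ) (Z : Fin (N + 1) → Scheme.{u}) (ι : ∀ j, Z j ⟶ T)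
      (hcl : ∀ j, IsClosedImmersion (ι j)) (hred : ∀ j, IsReduced (Z j)),
      -- `T₀` is the reduction `T_red` of `T`:
      Function.Surjective (ι 0).base ∧
      -- `T_N = ∅`:
      IsEmpty (Z (Fin.last N)) ∧
      -- the chain is strictly decreasing, each `T_i` for `i < N` being nonempty, and
      -- `T_{i+1}` is the complement of `U_{T_i}` with its reduced structure:
      ∃ (hne : ∀ j : Fin N, Nonempty (Z j.castSucc))
        (e : ∀ j : Fin N, Z j.succ ⟶ Z j.castSucc),
        (∀ j : Fin N, IsClosedImmersion (e j)) ∧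
        (∀ j : Fin N, e j ≫ ι j.castSucc = ι j.succ) ∧
        (∀ j : Fin N, Set.range (e j).base =
          ((U (Z j.castSucc) (ι j.castSucc) (hcl _) (hred _) (hne j) :
            Opens (Z j.castSucc)) : Set (Z j.castSucc))ᶜ) ∧
        (∀ j : Fin N, Set.range (ι j.succ).base ⊂ Set.range (ι j.castSucc).base) ∧
        -- the composite morphisms `V_{T_i} → T_i ×ₖ 𝔸¹ₖ → T ×ₖ 𝔸¹ₖ` :
        ∀ m : ∀ j : Fin N, V (Z j.castSucc) (ι j.castSucc) (hcl _) (hred _) (hne j) ⟶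
            prodA1 k tk,
          (∀ j : Fin N, m j = g (Z j.castSucc) (ι j.castSucc) (hcl _) (hred _) (hne j) ≫
            prodA1Map k (ι j.castSucc) rfl) →
          -- they form a cdp-covering of `T ×ₖ 𝔸¹ₖ`:
          IsProper (Sigma.desc m) ∧
          ∀ y : (prodA1 k tk : Scheme.{u}),
            ∃ (j : Fin N) (x : V (Z j.castSucc) (ι j.castSucc) (hcl _) (hred _) (hne j)),
              (m j).base x = y ∧ IsIso ((m j).residueFieldMap x) := by
  have hne {C : Closeds T} (hC : C ≠ ⊥) : Nonempty (reducedInduced C) :=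
    reducedInduced.nonempty_iff.mpr hC
  obtain ⟨N, C, hC₀, hCN, hanti, hC, hsucc, hcov⟩ := stmt1_general tk (affLineMap k)
    (fun C hC ↦ V _ (reducedInduced.ι C) inferInstance inferInstance (hne hC))
    (fun C hC ↦ g _ _ _ _ _) (fun C hC ↦ hgproper _ _ _ _ _)
    (fun C hC ↦ U _ (reducedInduced.ι C) inferInstance inferInstance (hne hC))
    (fun C hC ↦ have := hne hC; (hUdense _ _ _ _ _).nonempty)
    (fun C hC ↦ @IsCompletelyDecomposedAt.of_isIso _ _ _ (hUiso _ _ _ _ (hne hC)))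
  have hlt (j : Fin N) : C j.succ < C j.castSucc := hanti j.castSucc_lt_succ
  exact ⟨N, fun j ↦ reducedInduced (C j), fun j ↦ reducedInduced.ι (C j), inferInstance,
    inferInstance, reducedInduced.surjective_ι_iff.mpr hC₀, reducedInduced.isEmpty_iff.mpr hCN,
    fun j ↦ hne (hC j), fun j ↦ reducedInduced.inclusion (hlt j).le, inferInstance,
    fun j ↦ reducedInduced.inclusion_ι _,
    fun j ↦ reducedInduced.range_inclusion_of_eq_diff _ (hsucc j),
    fun j ↦ reducedInduced.range_ι_ssubset_range_ι_iff.mpr (hlt j),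
    fun m hm ↦ by obtain rfl := funext hm; exact hcov⟩
end
end

section
/- Fix a field k and a noetherian separated base scheme S over k, and let T be a separated S-scheme of finite type. Let (V_i)_{1≤i≤n} be a principal Mdf-sequence over T and let (W_i)_{1≤i≤n} be an arbitrary Mdf-sequence over T of the same length n. Then there exists an Mdf-sequence (V′_i)_{1≤i≤n} over T together with morphisms of Mdf-sequences (V′_i) → (V_i) and (V′_i) → (W_i) such that the induced morphism V′_{i,∞} → W_{i,∞} is surjective for every 1 ≤ i ≤ n. -/
open CategoryTheory CategoryTheory.Limits AlgebraicGeometry TopologicalSpace Opposite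

universe u

noncomputable section

variable (k : Type u) [Field k]

/-- The curve `□ := ℙ¹ ∖ {1} ≅ 𝔸¹` over `k`, modelled as the affine line `Spec k[t]`. -/
def boxScheme : Scheme.{u} := Spec (CommRingCat.of (Polynomial k))

/-- The structure morphism `□ → Spec k`. -/
def boxToSpec : boxScheme k ⟶ Spec (CommRingCat.of k) :=
  Spec.map (CommRingCat.ofHom (algebraMap k (Polynomial k)))

/-- The marked `k`-rational point `∞ ∈ □` (under the isomorphism `□ ≅ 𝔸¹` we take the
rational point cut out by `t = 0`). -/
def inftyMap : Spec (CommRingCat.of k) ⟶ boxScheme k :=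
  Spec.map (CommRingCat.ofHom (Polynomial.evalRingHom (0 : k)))

/-- The generic point `η` of `□`, i.e. the spectrum of the function field `k(t)`. -/
def genMap : Spec (CommRingCat.of (FractionRing (Polynomial k))) ⟶ boxScheme k :=
  Spec.map (CommRingCat.ofHom (algebraMap (Polynomial k) (FractionRing (Polynomial k))))

variable (S : Scheme.{u}) (sk : S ⟶ Spec (CommRingCat.of k))

/-- An Mdf-sequence of length `n` over `T` (relative to the base `S` over `k`):
a family `(V₁, …, Vₙ)` where `V_{0,∞} = T` and each `Vᵢ` is a separated `S`-scheme of finite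
type equipped with a proper morphism `Vᵢ → V_{i−1,∞} ×ₖ □`.  Here the flat part
`(Vᵢ)_fl ⊆ Vᵢ` — the scheme-theoretic closure of the generic fiber of `Vᵢ → □`, i.e. the
closed subscheme through which the generic fiber factors scheme-theoretically dominantly —
is recorded as part of the data, and `V_{i,∞} := (Vᵢ)_fl ×_□ {∞}` is recorded via a pullback
square. -/
structure MdfSeq (n : ℕ) (T : Scheme.{u}) (tS : T ⟶ S) : Type (u + 1) where
  /-- the schemes `V_{i,∞}`, with `V_{0,∞} = T` -/
  Vinf : Fin (n + 1) → Scheme.{u}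
  VinfS : ∀ i, Vinf i ⟶ S
  base_eq : Vinf 0 = T
  baseS_eq : VinfS 0 = eqToHom base_eq ≫ tS
  /-- the schemes `Vᵢ`, separated and of finite type over `S` -/
  V : Fin n → Scheme.{u}
  VS : ∀ i, V i ⟶ S
  VSsep : ∀ i, IsSeparated (VS i)
  VSlft : ∀ i, LocallyOfFiniteType (VS i)
  VSqc : ∀ i, QuasiCompact (VS i)
  /-- the proper structure morphisms `Vᵢ → V_{i−1,∞} ×ₖ □` -/
  g : ∀ i : Fin n, V i ⟶ pullback (VinfS i.castSucc ≫ sk) (boxToSpec k)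
  gS : ∀ i : Fin n, g i ≫ pullback.fst _ _ ≫ VinfS i.castSucc = VS i
  gproper : ∀ i, IsProper (g i)
  /-- the flat part `(Vᵢ)_fl`: a closed subscheme … -/
  Vfl : Fin n → Scheme.{u}
  ι : ∀ i, Vfl i ⟶ V i
  ιclosed : ∀ i, IsClosedImmersion (ι i)
  /-- … through which the generic fiber of `Vᵢ → □` factors … -/
  lift : ∀ i : Fin n, pullback (g i ≫ pullback.snd _ _) (genMap k) ⟶ Vfl i
  lift_comm : ∀ i : Fin n, lift i ≫ ι i = pullback.fst _ _
  /-- … scheme-theoretically dominantly (`O_{V_fl}` injects into the pushforward). -/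
  lift_dom : ∀ (i : Fin n) (U : (Vfl i).Opens), Function.Injective ((lift i).app U)
  /-- the fiber at infinity: `V_{i,∞} = (Vᵢ)_fl ×_□ {∞}` -/
  pr₁ : ∀ i : Fin n, Vinf i.succ ⟶ Vfl i
  pr₂ : ∀ i : Fin n, Vinf i.succ ⟶ Spec (CommRingCat.of k)
  isPB : ∀ i : Fin n,
    IsPullback (pr₁ i) (pr₂ i) (ι i ≫ g i ≫ pullback.snd _ _) (inftyMap k)
  VinfS_succ : ∀ i : Fin n, VinfS i.succ = pr₁ i ≫ ι i ≫ VS i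

/-- An Mdf-sequence is principal if all its structure morphisms are surjective. -/
def MdfSeq.Principal {n : ℕ} {T : Scheme.{u}} {tS : T ⟶ S} (A : MdfSeq k S sk n T tS) :
    Prop :=
  ∀ i : Fin n, Function.Surjective (A.g i).base

/-- A morphism of Mdf-sequences over `T`: morphisms `Vᵢ′ → Vᵢ` over `□`, compatible with the
structure morphisms via the induced morphisms `V′_{i−1,∞} → V_{i−1,∞}` (which are themselves
induced on the fibers at infinity by the maps of flat parts). -/
structure MdfHom {n : ℕ} {T : Scheme.{u}} {tS : T ⟶ S} (A B : MdfSeq k S sk n T tS) :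
    Type u where
  ψ : ∀ i, A.Vinf i ⟶ B.Vinf i
  ψS : ∀ i, ψ i ≫ B.VinfS i = A.VinfS i
  ψ0 : ψ 0 = eqToHom (A.base_eq.trans B.base_eq.symm)
  φ : ∀ i, A.V i ⟶ B.V i
  φfl : ∀ i, A.Vfl i ⟶ B.Vfl i
  φfl_comm : ∀ i, φfl i ≫ B.ι i = A.ι i ≫ φ i
  comm_fst : ∀ i : Fin n,
    φ i ≫ B.g i ≫ pullback.fst _ _ = A.g i ≫ pullback.fst _ _ ≫ ψ i.castSucc
  comm_snd : ∀ i : Fin n,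
    φ i ≫ B.g i ≫ pullback.snd _ _ = A.g i ≫ pullback.snd _ _
  ψ_pr₁ : ∀ i : Fin n, ψ i.succ ≫ B.pr₁ i = A.pr₁ i ≫ φfl i
  ψ_pr₂ : ∀ i : Fin n, ψ i.succ ≫ B.pr₂ i = A.pr₂ i

/-!
The `V'_i` are built by recursion on `i`. Given `X = V'_{i-1,∞}`, compatible with `V_{i-1,∞}` and
`W_{i-1,∞}`, pull `V_i` and `W_i` back to `X × □` and let `V'_i` be the fibre product of the two
over `X × □`. If `V_i ⟶ V_{i-1,∞} × □` and `X ⟶ W_{i-1,∞}` are proper and surjective, then so is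
`V'_i ⟶ W_i`. Such a morphism stays proper and surjective on flat parts: its image there is closed
and contains the generic fibre of `W_i`, which is dense. Its restriction to the fibres at infinity
is a base change, hence again proper and surjective, and the recursion continues.
-/

section BaseChange

variable {C : Type*} [Category* C] {X Y B P XP YP : C} {f : X ⟶ B} {g : Y ⟶ B} {x : P ⟶ B}
  {aX : XP ⟶ X} {bX : XP ⟶ P} {aY : YP ⟶ Y} {bY : YP ⟶ P}
  (hX : IsPullback aX bX f x) (hY : IsPullback aY bY g x) (m : X ⟶ Y) (hm : m ≫ g = f)

/-- The base change `X ×_B P ⟶ Y ×_B P` of a morphism `m : X ⟶ Y` over `B`, for arbitrary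
choices of the two fibre products. -/
def baseChangeMap : XP ⟶ YP :=
  hY.lift (aX ≫ m) bX (by rw [Category.assoc, hm, hX.w])

lemma baseChangeMap_fst : baseChangeMap hX hY m hm ≫ aY = aX ≫ m :=
  hY.lift_fst _ _ _

lemma baseChangeMap_snd : baseChangeMap hX hY m hm ≫ bY = bX :=
  hY.lift_snd _ _ _

lemma isPullback_baseChangeMap : IsPullback (baseChangeMap hX hY m hm) aX aY m := by
  subst hm
  exact .of_right (by rw [baseChangeMap_snd]; exact hX.flip) (baseChangeMap_fst ..) hY.flip

lemma baseChangeMap_mem {Q : MorphismProperty C} [Q.IsStableUnderBaseChange] (h : Q m) :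
    Q (baseChangeMap hX hY m hm) :=
  Q.of_isPullback (isPullback_baseChangeMap hX hY m hm).flip h

end BaseChange

section SchemeTheoreticallyDominant

variable {X Y Z W : Scheme.{u}}

lemma isSchemeTheoreticallyDominant_of_app_injective (f : X ⟶ Y) [QuasiCompact f]
    (h : ∀ U : Y.Opens, Function.Injective (f.app U)) : IsSchemeTheoreticallyDominant f := by
  refine ⟨?_⟩
  ext U : 2
  rw [f.ker_apply U]
  exact (RingHom.injective_iff_ker_eq_bot _).mp (h U)

instance isSchemeTheoreticallyDominant_toImage (f : X ⟶ Y) [QuasiCompact f] :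
    IsSchemeTheoreticallyDominant f.toImage :=
  isSchemeTheoreticallyDominant_of_app_injective _ fun U ↦
    TopCat.Presheaf.app_injective_of_stalkFunctor_map_injective (F := f.image.sheaf) f.toImage.c U
      fun x _ ↦ f.stalkFunctor_toImage_injective x

lemma ker_comp_of_isSchemeTheoreticallyDominant (e : X ⟶ Y) [IsSchemeTheoreticallyDominant e]
    (f : Y ⟶ Z) : (e ≫ f).ker = f.ker := by
  rw [Scheme.Hom.ker_comp, e.ker_eq_bot, Scheme.IdealSheafData.map_bot]

instance hasLiftingProperty_of_isClosedImmersion (e : X ⟶ Y)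
    [IsSchemeTheoreticallyDominant e] (ι : Z ⟶ W) [IsClosedImmersion ι] :
    HasLiftingProperty e ι where
  sq_hasLift {u v} sq := by
    have hker : ι.ker ≤ v.ker := by
      rw [← ker_comp_of_isSchemeTheoreticallyDominant e v, ← sq.w]
      exact Scheme.Hom.le_ker_comp u ι
    have hv : IsClosedImmersion.lift ι v hker ≫ ι = v := IsClosedImmersion.lift_fac ..
    exact ⟨⟨⟨IsClosedImmersion.lift ι v hker,
      by rw [← cancel_mono ι, Category.assoc, hv, sq.w], hv⟩⟩⟩

end SchemeTheoreticallyDominant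

section GenericClosure

/-- The factorization `l ≫ ι` of the projection `V ×_B G ⟶ V` exhibits `F` as the
scheme-theoretic closure in `V` of its fibre over `η : G ⟶ B`. For `η` the generic point of `□`
this is the flat part `V_fl`. -/
structure IsGenericClosure {V B G F : Scheme.{u}} (f : V ⟶ B) (η : G ⟶ B)
    (l : pullback f η ⟶ F) (ι : F ⟶ V) : Prop where
  isClosedImmersion : IsClosedImmersion ι
  fac : l ≫ ι = pullback.fst f η
  isSchemeTheoreticallyDominant : IsSchemeTheoreticallyDominant l

variable {V V' B G F F' : Scheme.{u}} {f : V ⟶ B} {f' : V' ⟶ B} {η : G ⟶ B}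
  {l : pullback f η ⟶ F} {ι : F ⟶ V} {l' : pullback f' η ⟶ F'} {ι' : F' ⟶ V'}

lemma isGenericClosure_image (f : V ⟶ B) (η : G ⟶ B) [QuasiCompact η] :
    IsGenericClosure f η (pullback.fst f η).toImage (pullback.fst f η).imageι where
  isClosedImmersion := inferInstance
  fac := (pullback.fst f η).toImage_imageι
  isSchemeTheoreticallyDominant := inferInstance

lemma quasiCompact_of_comp_eq_fst [QuasiCompact η] [IsClosedImmersion ι]
    (fac : l ≫ ι = pullback.fst f η) : QuasiCompact l := by
  have : QuasiCompact (l ≫ ι) := by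
    rw [fac]
    infer_instance
  exact .of_comp l ι

/-- The morphism of fibres over `η` induced by a morphism over `B`. -/
def fiberMap (η : G ⟶ B) (φ : V' ⟶ V) (hφ : φ ≫ f = f') : pullback f' η ⟶ pullback f η :=
  baseChangeMap (.of_hasPullback f' η) (.of_hasPullback f η) φ hφ

namespace IsGenericClosure

lemma of_app_injective [QuasiCompact η] [IsClosedImmersion ι] (fac : l ≫ ι = pullback.fst f η)
    (hl : ∀ U : F.Opens, Function.Injective (l.app U)) : IsGenericClosure f η l ι where
  isClosedImmersion := inferInstance
  fac := fac
  isSchemeTheoreticallyDominant :=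
    have := quasiCompact_of_comp_eq_fst fac
    isSchemeTheoreticallyDominant_of_app_injective l hl

lemma quasiCompact [QuasiCompact η] (h : IsGenericClosure f η l ι) : QuasiCompact l :=
  have := h.isClosedImmersion
  quasiCompact_of_comp_eq_fst h.fac

lemma app_injective [QuasiCompact η] (h : IsGenericClosure f η l ι) (U : F.Opens) :
    Function.Injective (l.app U) :=
  have := h.quasiCompact
  have := h.isSchemeTheoreticallyDominant
  l.app_injective U

lemma commSq (h' : IsGenericClosure f' η l' ι') (h : IsGenericClosure f η l ι) (φ : V' ⟶ V)
    (hφ : φ ≫ f = f') : CommSq (fiberMap η φ hφ ≫ l) l' ι (ι' ≫ φ) where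
  w := by rw [Category.assoc, h.fac, fiberMap, baseChangeMap_fst, ← h'.fac, Category.assoc]

variable (h' : IsGenericClosure f' η l' ι') (h : IsGenericClosure f η l ι) (φ : V' ⟶ V)
  (hφ : φ ≫ f = f')

/-- The morphism of closures of generic fibres induced by a morphism over `B`, for arbitrary choices
of the two closures. -/
def map : F' ⟶ F :=
  have := h'.isSchemeTheoreticallyDominant
  have := h.isClosedImmersion
  (h'.commSq h φ hφ).lift

lemma fac_map : l' ≫ h'.map h φ hφ = fiberMap η φ hφ ≫ l :=
  have := h'.isSchemeTheoreticallyDominant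
  have := h.isClosedImmersion
  (h'.commSq h φ hφ).fac_left

lemma map_comp : h'.map h φ hφ ≫ ι = ι' ≫ φ :=
  have := h'.isSchemeTheoreticallyDominant
  have := h.isClosedImmersion
  (h'.commSq h φ hφ).fac_right

lemma isProper_map [IsProper φ] : IsProper (h'.map h φ hφ) := by
  have := h'.isClosedImmersion
  have := h.isClosedImmersion
  have : IsProper (h'.map h φ hφ ≫ ι) := by
    rw [map_comp]
    infer_instance
  exact .of_comp _ ι

/-- The image is closed, and it contains the dense image of the generic fibre of `V`. -/
lemma surjective_map [QuasiCompact η] [IsProper φ] [Surjective φ] :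
    Surjective (h'.map h φ hφ) := by
  have := h.quasiCompact
  have := h.isSchemeTheoreticallyDominant
  have : Surjective (fiberMap η φ hφ) := baseChangeMap_mem _ _ _ _ ‹Surjective φ›
  have : IsDominant (l' ≫ h'.map h φ hφ) := by
    rw [fac_map]
    infer_instance
  have : IsDominant (h'.map h φ hφ) := .of_comp l' _
  have := h'.isProper_map h φ hφ
  exact surjective_of_isDominant_of_isClosed_range _ (h'.map h φ hφ).isClosedMap.isClosed_range

end IsGenericClosure

end GenericClosure

instance quasiCompact_genMap : QuasiCompact (genMap k) :=
  inferInstanceAs (QuasiCompact (Spec.map _))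

section Step

variable {k S}

/-- The product `X ×ₖ □` for an `S`-scheme `X`. -/
abbrev boxProd {X : Scheme.{u}} (xS : X ⟶ S) : Scheme.{u} :=
  pullback (xS ≫ sk) (boxToSpec k)

/-- The morphism `p × □ : X ×ₖ □ ⟶ Y ×ₖ □` induced by a morphism `p : X ⟶ Y` over `S`. -/
def boxMap {X Y : Scheme.{u}} {xS : X ⟶ S} {yS : Y ⟶ S} (p : X ⟶ Y) (hp : p ≫ yS = xS) :
    boxProd sk xS ⟶ boxProd sk yS :=
  baseChangeMap (.of_hasPullback _ _) (.of_hasPullback _ _) p (by rw [← hp, Category.assoc])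

/-- A single term of an Mdf-sequence, without the properness and finiteness conditions: a morphism
`V ⟶ X ×ₖ □` together with the flat part of `V`, the factorization `gen` of the generic fibre
through it, and its fibre `V_∞` at infinity. As in `MdfSeq`, the last three are recorded as data. -/
structure MdfStep : Type (u + 1) where
  base : Scheme.{u}
  baseS : base ⟶ S
  total : Scheme.{u}
  str : total ⟶ boxProd sk baseS
  flat : Scheme.{u}
  ι : flat ⟶ total
  gen : pullback (str ≫ pullback.snd _ _) (genMap k) ⟶ flat
  isGenericClosure : IsGenericClosure (str ≫ pullback.snd _ _) (genMap k) gen ι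
  inf : Scheme.{u}
  pr₁ : inf ⟶ flat
  pr₂ : inf ⟶ Spec (CommRingCat.of k)
  isPullback : IsPullback pr₁ pr₂ (ι ≫ str ≫ pullback.snd _ _) (inftyMap k)

namespace MdfStep

/-- The step defined by a morphism `V ⟶ X ×ₖ □`: its flat part is the scheme-theoretic image of the
generic fibre. -/
abbrev ofHom {X V : Scheme.{u}} (xS : X ⟶ S) (g : V ⟶ boxProd sk xS) : MdfStep sk where
  base := X
  baseS := xS
  total := V
  str := g
  flat := (pullback.fst (g ≫ pullback.snd _ _) (genMap k)).image
  ι := (pullback.fst (g ≫ pullback.snd _ _) (genMap k)).imageι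
  gen := (pullback.fst (g ≫ pullback.snd _ _) (genMap k)).toImage
  isGenericClosure := isGenericClosure_image _ _
  inf := pullback ((pullback.fst (g ≫ pullback.snd _ _) (genMap k)).imageι ≫ g ≫
    pullback.snd _ _) (inftyMap k)
  pr₁ := pullback.fst _ _
  pr₂ := pullback.snd _ _
  isPullback := .of_hasPullback _ _

variable {sk}

/-- The structure morphism `V ⟶ S`. -/
def totalS (M : MdfStep sk) : M.total ⟶ S := M.str ≫ pullback.fst _ _ ≫ M.baseS

/-- The structure morphism `V_∞ ⟶ S`. -/
def infS (M : MdfStep sk) : M.inf ⟶ S := M.pr₁ ≫ M.ι ≫ M.totalS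

/-- A morphism of steps: morphisms `X' ⟶ X` over `S` and `V' ⟶ V` compatible with the structure
morphisms to `X' ×ₖ □` and `X ×ₖ □`. -/
structure Hom (M N : MdfStep sk) : Type u where
  base : M.base ⟶ N.base
  base_comp : base ≫ N.baseS = M.baseS
  total : M.total ⟶ N.total
  total_comp : total ≫ N.str = M.str ≫ boxMap sk base base_comp

namespace Hom

variable {M N : MdfStep sk} (c : M.Hom N)

lemma total_fst : c.total ≫ N.str ≫ pullback.fst _ _ = M.str ≫ pullback.fst _ _ ≫ c.base := by
  rw [reassoc_of% c.total_comp, boxMap, baseChangeMap_fst]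

lemma total_snd : c.total ≫ N.str ≫ pullback.snd _ _ = M.str ≫ pullback.snd _ _ := by
  rw [reassoc_of% c.total_comp, boxMap, baseChangeMap_snd]

lemma total_totalS : c.total ≫ N.totalS = M.totalS := by
  rw [totalS, totalS, reassoc_of% c.total_fst, c.base_comp]

/-- The induced morphism of flat parts. -/
def flat : M.flat ⟶ N.flat :=
  M.isGenericClosure.map N.isGenericClosure c.total c.total_snd

lemma flat_ι : c.flat ≫ N.ι = M.ι ≫ c.total :=
  M.isGenericClosure.map_comp ..

lemma flat_snd : c.flat ≫ N.ι ≫ N.str ≫ pullback.snd _ _ = M.ι ≫ M.str ≫ pullback.snd _ _ := by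
  rw [reassoc_of% c.flat_ι, c.total_snd]

/-- The induced morphism of fibres at infinity. -/
def inf : M.inf ⟶ N.inf :=
  baseChangeMap M.isPullback N.isPullback c.flat c.flat_snd

lemma inf_pr₁ : c.inf ≫ N.pr₁ = M.pr₁ ≫ c.flat := baseChangeMap_fst ..

lemma inf_pr₂ : c.inf ≫ N.pr₂ = M.pr₂ := baseChangeMap_snd ..

lemma inf_infS : c.inf ≫ N.infS = M.infS := by
  rw [infS, infS, reassoc_of% c.inf_pr₁, reassoc_of% c.flat_ι, c.total_totalS]

lemma isProper_inf [IsProper c.total] : IsProper c.inf :=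
  baseChangeMap_mem _ _ _ _ (IsGenericClosure.isProper_map ..)

lemma surjective_inf [IsProper c.total] [Surjective c.total] : Surjective c.inf :=
  baseChangeMap_mem _ _ _ _ (IsGenericClosure.surjective_map ..)

end Hom

section Prod

variable (M N : MdfStep sk) {X : Scheme.{u}} {xS : X ⟶ S} (p : X ⟶ M.base)
  (hp : p ≫ M.baseS = xS) (q : X ⟶ N.base) (hq : q ≫ N.baseS = xS)

/-- The fibre product over `X ×ₖ □` of the base changes of two steps along `p` and `q`, formed as
`V ×_{(X_V ×ₖ □)} (W ×_{(X_W ×ₖ □)} (X ×ₖ □))`, so that the projection to `W` is a base change of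
the structure morphism of `V` followed by a base change of `q × □`. -/
abbrev prod : MdfStep sk :=
  ofHom sk xS (pullback.snd M.str (pullback.snd N.str (boxMap sk q hq) ≫ boxMap sk p hp) ≫
    pullback.snd N.str (boxMap sk q hq))

/-- The projection from the fibre product to the first factor. -/
def prodFst : (M.prod N p hp q hq).Hom M where
  base := p
  base_comp := hp
  total := pullback.fst _ _
  total_comp := by rw [pullback.condition, Category.assoc]

/-- The projection from the fibre product to the second factor. -/
def prodSnd : (M.prod N p hp q hq).Hom N where
  base := q
  base_comp := hq
  total := pullback.snd _ _ ≫ pullback.fst _ _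
  total_comp := by rw [Category.assoc, pullback.condition, Category.assoc]

lemma isProper_prod_str [IsProper M.str] [IsProper N.str] :
    IsProper (M.prod N p hp q hq).str :=
  inferInstance

lemma isProper_prodSnd_total [IsProper M.str] [IsProper q] :
    IsProper (M.prodSnd N p hp q hq).total := by
  have : IsProper (boxMap sk q hq) := baseChangeMap_mem _ _ _ _ ‹IsProper q›
  unfold prodSnd
  infer_instance

lemma surjective_prodSnd_total [Surjective M.str] [Surjective q] :
    Surjective (M.prodSnd N p hp q hq).total := by
  have : Surjective (boxMap sk q hq) := baseChangeMap_mem _ _ _ _ ‹Surjective q›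
  unfold prodSnd
  infer_instance

end Prod

end MdfStep

end Step

section Refinement

variable {k S sk} {n : ℕ} {T : Scheme.{u}} {tS : T ⟶ S}

attribute [instance] MdfSeq.VSsep MdfSeq.VSlft MdfSeq.VSqc MdfSeq.gproper MdfSeq.ιclosed

namespace MdfSeq

/-- The `i`-th term of an Mdf-sequence. -/
abbrev step (A : MdfSeq k S sk n T tS) (i : Fin n) : MdfStep sk where
  base := A.Vinf i.castSucc
  baseS := A.VinfS i.castSucc
  total := A.V i
  str := A.g i
  flat := A.Vfl i
  ι := A.ι i
  gen := A.lift i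
  isGenericClosure := .of_app_injective (A.lift_comm i) (A.lift_dom i)
  inf := A.Vinf i.succ
  pr₁ := A.pr₁ i
  pr₂ := A.pr₂ i
  isPullback := A.isPB i

variable (A : MdfSeq k S sk n T tS) (i : Fin n)

lemma step_totalS : (A.step i).totalS = A.VS i := A.gS i

lemma step_infS : (A.step i).infS = A.VinfS i.succ := by
  rw [A.VinfS_succ, ← A.step_totalS, MdfStep.infS]

end MdfSeq

/-- A morphism of Mdf-sequences assembled from morphisms of the individual steps. -/
def MdfHom.ofStepHoms {A B : MdfSeq k S sk n T tS} (c : ∀ i, (A.step i).Hom (B.step i))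
    (ψ : ∀ i, A.Vinf i ⟶ B.Vinf i) (ψ0 : ψ 0 = eqToHom (A.base_eq.trans B.base_eq.symm))
    (ψ_castSucc : ∀ i : Fin n, ψ i.castSucc = (c i).base)
    (ψ_succ : ∀ i : Fin n, ψ i.succ = (c i).inf) : MdfHom k S sk A B where
  ψ := ψ
  ψS := Fin.cases
    (by rw [ψ0, A.baseS_eq, B.baseS_eq, eqToHom_trans_assoc])
    (fun i ↦ by rw [ψ_succ, ← A.step_infS, ← B.step_infS, (c i).inf_infS])
  ψ0 := ψ0
  φ i := (c i).total
  φfl i := (c i).flat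
  φfl_comm i := (c i).flat_ι
  comm_fst i := by rw [ψ_castSucc]; exact (c i).total_fst
  comm_snd i := (c i).total_snd
  ψ_pr₁ i := by rw [ψ_succ]; exact (c i).inf_pr₁
  ψ_pr₂ i := by rw [ψ_succ]; exact (c i).inf_pr₂

/-- A candidate for `V'_{i,∞}`: a scheme `X` over `S` with compatible morphisms to `V_{i,∞}` and
`W_{i,∞}`, the second one proper and surjective. -/
structure MdfRefinement (A W : MdfSeq k S sk n T tS) (i : Fin (n + 1)) : Type (u + 1) where
  X : Scheme.{u}
  XS : X ⟶ S
  toLeft : X ⟶ A.Vinf i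
  toLeft_comp : toLeft ≫ A.VinfS i = XS
  toRight : X ⟶ W.Vinf i
  toRight_comp : toRight ≫ W.VinfS i = XS
  isProper_toRight : IsProper toRight
  surjective_toRight : Surjective toRight

namespace MdfRefinement

attribute [instance] isProper_toRight surjective_toRight

variable {A W : MdfSeq k S sk n T tS}

section Next

variable {i : Fin n} (R : MdfRefinement A W i.castSucc)

/-- The term `V'_{i+1} ⟶ X ×ₖ □` of the common refinement. -/
abbrev step : MdfStep sk :=
  (A.step i).prod (W.step i) R.toLeft R.toLeft_comp R.toRight R.toRight_comp

/-- The projection `V'_{i+1} ⟶ V_{i+1}`. -/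
abbrev stepLeft : R.step.Hom (A.step i) := MdfStep.prodFst ..

/-- The projection `V'_{i+1} ⟶ W_{i+1}`. -/
abbrev stepRight : R.step.Hom (W.step i) := MdfStep.prodSnd ..

instance isProper_stepRight_total : IsProper R.stepRight.total :=
  MdfStep.isProper_prodSnd_total ..

lemma step_totalS : R.step.totalS = R.stepRight.total ≫ W.VS i := by
  rw [← W.step_totalS, R.stepRight.total_totalS]

/-- The refinement at the next index, given by the fibre at infinity of `R.step`. -/
def next (hA : Surjective (A.g i)) : MdfRefinement A W i.succ where
  X := R.step.inf
  XS := R.step.infS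
  toLeft := R.stepLeft.inf
  toLeft_comp := by rw [← A.step_infS, R.stepLeft.inf_infS]
  toRight := R.stepRight.inf
  toRight_comp := by rw [← W.step_infS, R.stepRight.inf_infS]
  isProper_toRight := R.stepRight.isProper_inf
  surjective_toRight :=
    have : Surjective R.stepRight.total := MdfStep.surjective_prodSnd_total ..
    R.stepRight.surjective_inf

end Next

variable (A W) in
/-- The refinement at index `0`, given by `T` itself. -/
def initial : MdfRefinement A W 0 where
  X := T
  XS := tS
  toLeft := eqToHom A.base_eq.symm
  toLeft_comp := by rw [A.baseS_eq, eqToHom_trans_assoc, eqToHom_refl, Category.id_comp]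
  toRight := eqToHom W.base_eq.symm
  toRight_comp := by rw [W.baseS_eq, eqToHom_trans_assoc, eqToHom_refl, Category.id_comp]
  isProper_toRight := inferInstance
  surjective_toRight := inferInstance

variable (W) (hA : ∀ i, Surjective (A.g i))

/-- The refinements at all indices, defined by recursion. -/
def stage : ∀ i, MdfRefinement A W i :=
  Fin.induction (initial A W) fun i R ↦ R.next (hA i)

/-- The common refinement of a principal and an arbitrary Mdf-sequence. -/
def seq : MdfSeq k S sk n T tS where
  Vinf i := (stage W hA i).X
  VinfS i := (stage W hA i).XS
  base_eq := rfl
  baseS_eq := (Category.id_comp _).symm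
  V i := (stage W hA i.castSucc).step.total
  VS i := (stage W hA i.castSucc).step.totalS
  VSsep i := by rw [step_totalS]; infer_instance
  VSlft i := by rw [step_totalS]; infer_instance
  VSqc i := by rw [step_totalS]; infer_instance
  g i := (stage W hA i.castSucc).step.str
  gS _ := rfl
  gproper _ := MdfStep.isProper_prod_str ..
  Vfl i := (stage W hA i.castSucc).step.flat
  ι i := (stage W hA i.castSucc).step.ι
  ιclosed i := (stage W hA i.castSucc).step.isGenericClosure.isClosedImmersion
  lift i := (stage W hA i.castSucc).step.gen
  lift_comm i := (stage W hA i.castSucc).step.isGenericClosure.fac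
  lift_dom i := (stage W hA i.castSucc).step.isGenericClosure.app_injective
  pr₁ i := (stage W hA i.castSucc).step.pr₁
  pr₂ i := (stage W hA i.castSucc).step.pr₂
  isPB i := (stage W hA i.castSucc).step.isPullback
  VinfS_succ _ := rfl

/-- The projection of the common refinement to the principal Mdf-sequence. -/
def homLeft : MdfHom k S sk (seq W hA) A :=
  .ofStepHoms (fun i ↦ (stage W hA i.castSucc).stepLeft) (fun i ↦ (stage W hA i).toLeft)
    rfl (fun _ ↦ rfl) (fun _ ↦ rfl)

/-- The projection of the common refinement to the arbitrary Mdf-sequence. -/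
def homRight : MdfHom k S sk (seq W hA) W :=
  .ofStepHoms (fun i ↦ (stage W hA i.castSucc).stepRight) (fun i ↦ (stage W hA i).toRight)
    rfl (fun _ ↦ rfl) (fun _ ↦ rfl)

end MdfRefinement

end Refinement

theorem stmt6_general (T : Scheme.{u}) (tS : T ⟶ S) (n : ℕ) (A : MdfSeq k S sk n T tS)
    (hA : A.Principal k S sk) (W : MdfSeq k S sk n T tS) :
    ∃ (A' : MdfSeq k S sk n T tS) (_ : MdfHom k S sk A' A) (β : MdfHom k S sk A' W),
      ∀ i : Fin (n + 1), IsProper (β.ψ i) ∧ Surjective (β.ψ i) := by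
  have hA' : ∀ i, Surjective (A.g i) := fun i ↦ ⟨hA i⟩
  let R := MdfRefinement.stage W hA'
  exact ⟨MdfRefinement.seq W hA', MdfRefinement.homLeft W hA', MdfRefinement.homRight W hA',
    fun i ↦ ⟨(R i).isProper_toRight, (R i).surjective_toRight⟩⟩

/-- Fix a field `k`, a noetherian separated base scheme `S` over `k` and a
separated `S`-scheme `T` of finite type.  Let `(Vᵢ)` be a principal Mdf-sequence over `T` and
`(Wᵢ)` an arbitrary Mdf-sequence over `T` of the same length `n`.  Then there exists an
Mdf-sequence `(Vᵢ′)` over `T` together with morphisms of Mdf-sequences `(Vᵢ′) → (Vᵢ)` and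
`(Vᵢ′) → (Wᵢ)` such that the induced morphisms `V′_{i,∞} → W_{i,∞}` are surjective for all
`1 ≤ i ≤ n`. -/
theorem stmt6 [IsNoetherian S] (hSsep : IsSeparated sk)
    (T : Scheme.{u}) (tS : T ⟶ S)
    (hTsep : IsSeparated tS) (hTlft : LocallyOfFiniteType tS) (hTqc : QuasiCompact tS)
    (n : ℕ) (A : MdfSeq k S sk n T tS) (hA : A.Principal k S sk)
    (W : MdfSeq k S sk n T tS) :
    ∃ (A' : MdfSeq k S sk n T tS) (_ : MdfHom k S sk A' A) (β : MdfHom k S sk A' W),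
      ∀ i : Fin n, Function.Surjective (β.ψ i.succ).base := by
  obtain ⟨A', α, β, hβ⟩ := stmt6_general k S sk T tS n A hA W
  exact ⟨A', α, β, fun i ↦ (hβ i.succ).2.surj⟩

end
end
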